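/- arXiv:1803.07974 — 3 statements merged into one kernel-verified Lean document; each statement's English description precedes it below -/
import Mathlib

section
/- Let N : V → ℂ^δ be a linear map that covers a truncated normal form on V with respect to I (i.e., there exist a TNF 𝒩₀ : V → B₀ on V w.r.t. I and a ℂ-linear isomorphism P : B₀ → ℂ^δ with N = P ∘ 𝒩₀). Then for any δ-dimensional ℂ-subspace B ⊆ W = {f ∈ V : x_i·f ∈ V for i = 1,…,n} such that the restriction N|_B : B → ℂ^δ is bijective, the map 𝒩 = (N|_B)^{-1} ∘ N : V → B is a truncated normal form on V with respect to I. -/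
open MvPolynomial

/-- A truncated normal form (TNF) on `V` w.r.t. `I`: a surjective `ℂ`-linear map
`𝒩 : V → B` where `B ⊆ V`, `dim_ℂ B = δ`, `x_i · B ⊆ V` for all `i`,
`ker 𝒩 = I ∩ V`, and `𝒩` restricted to `B` is the identity on `B`. -/
structure IsTNF (n δ : ℕ) (I : Ideal (MvPolynomial (Fin n) ℂ))
    (V B : Submodule ℂ (MvPolynomial (Fin n) ℂ)) (𝒩 : V →ₗ[ℂ] B) : Prop where
  hBV : B ≤ V
  hdim : Module.finrank ℂ B = δ
  hmul : ∀ b ∈ B, ∀ i : Fin n, MvPolynomial.X i * b ∈ V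
  hsurj : Function.Surjective 𝒩
  hker : LinearMap.ker 𝒩 = Submodule.comap V.subtype (Submodule.restrictScalars ℂ I)
  hid : ∀ v : V, (v : MvPolynomial (Fin n) ℂ) ∈ B →
    ((𝒩 v : B) : MvPolynomial (Fin n) ℂ) = (v : MvPolynomial (Fin n) ℂ)

/-- `N : V → ℂ^δ` covers a TNF if `N = P ∘ 𝒩₀` for some TNF `𝒩₀ : V → B₀` and
some `ℂ`-linear isomorphism `P : B₀ → ℂ^δ`. -/
def CoversTNF (n δ : ℕ) (I : Ideal (MvPolynomial (Fin n) ℂ))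
    (V : Submodule ℂ (MvPolynomial (Fin n) ℂ)) (N : V →ₗ[ℂ] (Fin δ → ℂ)) : Prop :=
  ∃ (B₀ : Submodule ℂ (MvPolynomial (Fin n) ℂ)) (𝒩₀ : V →ₗ[ℂ] B₀)
    (P : B₀ ≃ₗ[ℂ] (Fin δ → ℂ)), IsTNF n δ I V B₀ 𝒩₀ ∧ ∀ v : V, N v = P (𝒩₀ v)

theorem leftInverse_of_comp_apply_eq {α β γ : Type*} {f : α → γ} {g : β → α} {r : α → β}
    (hinj : Function.Injective (f ∘ g)) (hr : ∀ a, (f ∘ g) (r a) = f a) :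
    Function.LeftInverse r g :=
  fun b => hinj (hr (g b))

theorem CoversTNF.ker_eq {n δ : ℕ} {I : Ideal (MvPolynomial (Fin n) ℂ)}
    {V : Submodule ℂ (MvPolynomial (Fin n) ℂ)} {N : V →ₗ[ℂ] (Fin δ → ℂ)}
    (hN : CoversTNF n δ I V N) :
    LinearMap.ker N = Submodule.comap V.subtype (Submodule.restrictScalars ℂ I) := by
  obtain ⟨B₀, 𝒩₀, P, h₀, hP⟩ := hN
  have hfactor : N = P.toLinearMap ∘ₗ 𝒩₀ := LinearMap.ext hP
  rw [hfactor, LinearEquiv.ker_comp, h₀.hker]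

theorem stmt0_general {n δ : ℕ} {I : Ideal (MvPolynomial (Fin n) ℂ)}
    {V : Submodule ℂ (MvPolynomial (Fin n) ℂ)} {N : V →ₗ[ℂ] (Fin δ → ℂ)}
    (hker : LinearMap.ker N = Submodule.comap V.subtype (Submodule.restrictScalars ℂ I))
    {B : Submodule ℂ (MvPolynomial (Fin n) ℂ)} (hBV : B ≤ V)
    (hXB : ∀ i : Fin n, B ≤ Submodule.comap (LinearMap.mulLeft ℂ (X i)) V)
    (hbij : Function.Bijective (N ∘ₗ Submodule.inclusion hBV))
    {𝒩 : V →ₗ[ℂ] B} (h𝒩 : ∀ v : V, (N ∘ₗ Submodule.inclusion hBV) (𝒩 v) = N v) :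
    IsTNF n δ I V B 𝒩 := by
  have hretract : Function.LeftInverse 𝒩 (Submodule.inclusion hBV) :=
    leftInverse_of_comp_apply_eq hbij.injective h𝒩
  have hfactor : (N ∘ₗ Submodule.inclusion hBV) ∘ₗ 𝒩 = N := LinearMap.ext h𝒩
  have hker_eq : LinearMap.ker 𝒩 = LinearMap.ker N := by
    rw [← LinearMap.ker_comp_of_ker_eq_bot 𝒩 (LinearMap.ker_eq_bot_of_injective hbij.injective),
      hfactor]
  exact
    { hBV := hBV
      hdim := (LinearEquiv.ofBijective _ hbij).finrank_eq.trans (Module.finrank_fin_fun ℂ)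
      hmul := fun _ hb i => hXB i hb
      hsurj := hretract.surjective
      hker := hker_eq.trans hker
      hid := fun v hv => congrArg Subtype.val (hretract ⟨v, hv⟩) }

/-- if `N` covers a TNF on `V` w.r.t. `I`, then for any `δ`-dimensional
subspace `B ⊆ W = {f ∈ V : x_i f ∈ V, i = 1,…,n}` such that `N|_B` is bijective,
the map `𝒩 = (N|_B)⁻¹ ∘ N : V → B` is a TNF on `V` w.r.t. `I`. -/
theorem stmt0 (n δ : ℕ) (I : Ideal (MvPolynomial (Fin n) ℂ))
    (hfin : FiniteDimensional ℂ (MvPolynomial (Fin n) ℂ ⧸ I))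
    (hδ : Module.finrank ℂ (MvPolynomial (Fin n) ℂ ⧸ I) = δ)
    (V : Submodule ℂ (MvPolynomial (Fin n) ℂ))
    (N : V →ₗ[ℂ] (Fin δ → ℂ)) (hN : CoversTNF n δ I V N)
    (B : Submodule ℂ (MvPolynomial (Fin n) ℂ))
    (hBW : B ≤ V ⊓ ⨅ i : Fin n, Submodule.comap (LinearMap.mulLeft ℂ (X i)) V)
    (hBdim : Module.finrank ℂ B = δ)
    (hBV : B ≤ V)
    (hbij : Function.Bijective (N ∘ₗ Submodule.inclusion hBV))
    (𝒩 : V →ₗ[ℂ] B)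
    (h𝒩 : ∀ v : V, (N ∘ₗ Submodule.inclusion hBV) (𝒩 v) = N v) :
    IsTNF n δ I V B 𝒩 := by
  have hXB := le_iInf_iff.mp (le_inf_iff.mp hBW).2
  exact stmt0_general hN.ker_eq hBV hXB hbij h𝒩
end

section
/- Let N : V → ℂ^δ be a surjective ℂ-linear map. Then N covers a truncated normal form on V with respect to I (i.e., N = P ∘ 𝒩 for some TNF 𝒩 : V → B on V w.r.t. I and some ℂ-linear isomorphism P : B → ℂ^δ) if and only if the following three conditions hold: (a) there exists u ∈ V such that the residue class u + I is a unit in the ring R/I; (b) ker N ⊆ I ∩ V; (c) the restriction of N to W = {f ∈ V : x_i·f ∈ V for i = 1,…,n} is surjective onto ℂ^δ. -/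
/-!
A linear section `E → W` of the restriction of `N : V → E` to `W` embeds `E` as a space `B ⊆ W` of
normal forms; hence `N` covers a truncated normal form exactly when its restriction to `W` is onto
and `ker N = I ∩ V`. Given (b) and (c), it remains to see that `ker N = I ∩ V` means (a).

By (b), the residue map `V → R ⧸ I` factors through `N`, and since `E` and `R ⧸ I` have the same
finite dimension, `ker N = I ∩ V` if and only if the residue map is onto. By (c), every residue
class of `V` has a representative in `W`, so the image of `V` in `R ⧸ I` is stable under
multiplication by the variables. It is therefore an ideal, and it is everything if and only if it
contains a unit.
-/

open MvPolynomial

section StableSubmodule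

variable {K A P : Type*} [CommSemiring K] [Semiring A] [Algebra K A] [AddCommMonoid P]
  [Module K P] [Module A P] [IsScalarTower K A P]

theorem smul_mem_of_mem_adjoin {s : Set A} {M : Submodule K P}
    (hM : ∀ a ∈ s, ∀ m ∈ M, a • m ∈ M) {a : A} (ha : a ∈ Algebra.adjoin K s) {m : P}
    (hm : m ∈ M) : a • m ∈ M := by
  induction ha using Algebra.adjoin_induction generalizing m with
  | mem a ha => exact hM a ha m hm
  | algebraMap r => simpa only [algebraMap_smul] using M.smul_mem r hm
  | add a b _ _ iha ihb => simpa only [add_smul] using M.add_mem (iha hm) (ihb hm)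
  | mul a b _ _ iha ihb => simpa only [mul_smul] using iha (ihb hm)

end StableSubmodule

theorem eq_top_of_isUnit_mem_of_smul_mem {K A : Type*} [CommSemiring K] [CommRing A]
    [Algebra K A] {s : Set A} (hs : Algebra.adjoin K s = ⊤) {I : Ideal A}
    {M : Submodule K (A ⧸ I)} (hM : ∀ a ∈ s, ∀ m ∈ M, a • m ∈ M) {u : A ⧸ I} (hu : IsUnit u)
    (huM : u ∈ M) : M = ⊤ := by
  refine Submodule.eq_top_iff'.2 fun y => ?_
  obtain ⟨w, hw⟩ := hu.exists_left_inv
  obtain ⟨a, ha⟩ := Ideal.Quotient.mk_surjective (y * w)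
  have hau : a • u = y := by
    rw [Algebra.smul_def, Ideal.Quotient.algebraMap_eq, ha, mul_assoc, hw, mul_one]
  exact hau ▸ smul_mem_of_mem_adjoin hM (hs ▸ Algebra.mem_top) huM

theorem ker_eq_ker_iff_surjective_of_finrank_eq {K V E F : Type*} [DivisionRing K]
    [AddCommGroup V] [Module K V] [AddCommGroup E] [Module K E] [FiniteDimensional K E]
    [AddCommGroup F] [Module K F] [FiniteDimensional K F]
    (hEF : Module.finrank K E = Module.finrank K F) {f : V →ₗ[K] E} {g : V →ₗ[K] F}
    (hf : Function.Surjective f) (hfg : LinearMap.ker f ≤ LinearMap.ker g) :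
    LinearMap.ker f = LinearMap.ker g ↔ Function.Surjective g := by
  obtain ⟨φ, rfl⟩ : ∃ φ : E →ₗ[K] F, φ ∘ₗ f = g :=
    ⟨(LinearMap.ker f).liftQ g hfg ∘ₗ (f.quotKerEquivOfSurjective hf).symm, by
      ext v
      simp [LinearMap.quotKerEquivOfSurjective_symm_apply]⟩
  have hinj : LinearMap.ker f = LinearMap.ker (φ ∘ₗ f) ↔ Function.Injective φ := by
    rw [← LinearMap.ker_eq_bot, LinearMap.ker_comp,
      ← (Submodule.comap_injective_of_surjective hf).eq_iff]
    exact eq_comm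
  rw [hinj, LinearMap.injective_iff_surjective_of_finrank_eq_finrank hEF, LinearMap.coe_comp,
    hf.of_comp_iff]

section TruncatedNormalForm

variable {K A E ι : Type*} [CommRing K] [CommRing A] [Algebra K A] [AddCommGroup E] [Module K E]

/-- The subspace `W` of those `f ∈ V` for which all the multiples `x i * f` lie in `V`; it is the
largest `W ⊆ V` whose prolongation `W + ∑ i, x i * W` is contained in `V`. -/
def prolongable (x : ι → A) (V : Submodule K A) : Submodule K A :=
  V ⊓ ⨅ i, V.comap (LinearMap.mulLeft K (x i))

theorem mem_prolongable {x : ι → A} {V : Submodule K A} {f : A} :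
    f ∈ prolongable x V ↔ f ∈ V ∧ ∀ i, x i * f ∈ V := by
  simp [prolongable]

theorem prolongable_le (x : ι → A) (V : Submodule K A) : prolongable x V ≤ V :=
  inf_le_left

/-- The residue map `V → A ⧸ I`, `f ↦ f + I`, whose kernel is `I ∩ V`. -/
def residue (I : Ideal A) (V : Submodule K A) : V →ₗ[K] A ⧸ I :=
  (Ideal.Quotient.mkₐ K I).toLinearMap ∘ₗ V.subtype

theorem ker_residue (I : Ideal A) (V : Submodule K A) :
    LinearMap.ker (residue I V) = (I.restrictScalars K).comap V.subtype := by
  ext v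
  exact Ideal.Quotient.eq_zero_iff_mem

/-- Truncated normal forms on `V` with respect to an ideal `I` of an algebra with distinguished
elements `x i`, which play the role of the variables of a polynomial ring. Surjectivity of `𝒩`
is not a field, since it is part of `apply_inclusion`. -/
structure IsTruncatedNormalForm (x : ι → A) (I : Ideal A) (V B : Submodule K A)
    (𝒩 : V →ₗ[K] B) : Prop where
  le_prolongable : B ≤ prolongable x V
  finrank_eq : Module.finrank K B = Module.finrank K (A ⧸ I)
  ker_eq : LinearMap.ker 𝒩 = (I.restrictScalars K).comap V.subtype
  apply_inclusion : ∀ b : B,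
    𝒩 (Submodule.inclusion (le_prolongable.trans (prolongable_le x V)) b) = b

/-- `N` is a truncated normal form followed by a coordinate isomorphism `P : B ≃ E`. -/
def CoversTruncatedNormalForm (x : ι → A) (I : Ideal A) {V : Submodule K A} (N : V →ₗ[K] E) :
    Prop :=
  ∃ (B : Submodule K A) (𝒩 : V →ₗ[K] B) (P : B ≃ₗ[K] E),
    IsTruncatedNormalForm x I V B 𝒩 ∧ ∀ v, N v = P (𝒩 v)

variable {x : ι → A} {I : Ideal A} {V : Submodule K A} {N : V →ₗ[K] E}

theorem CoversTruncatedNormalForm.ker_eq (h : CoversTruncatedNormalForm x I N) :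
    LinearMap.ker N = (I.restrictScalars K).comap V.subtype := by
  obtain ⟨B, 𝒩, P, h𝒩, hN⟩ := h
  obtain rfl : N = P.toLinearMap ∘ₗ 𝒩 := LinearMap.ext hN
  rw [LinearEquiv.ker_comp, h𝒩.ker_eq]

theorem CoversTruncatedNormalForm.surjective_comp_inclusion
    (h : CoversTruncatedNormalForm x I N) :
    Function.Surjective (N ∘ₗ Submodule.inclusion (prolongable_le x V)) := by
  obtain ⟨B, 𝒩, P, h𝒩, hN⟩ := h
  refine fun y => ⟨Submodule.inclusion h𝒩.le_prolongable (P.symm y), ?_⟩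
  calc N (Submodule.inclusion (h𝒩.le_prolongable.trans (prolongable_le x V)) (P.symm y))
      = P (P.symm y) := by rw [hN, h𝒩.apply_inclusion]
    _ = y := P.apply_symm_apply y

theorem coversTruncatedNormalForm_of_ker_eq [Module.Projective K E]
    (hE : Module.finrank K E = Module.finrank K (A ⧸ I))
    (hker : LinearMap.ker N = (I.restrictScalars K).comap V.subtype)
    (hsurj : Function.Surjective (N ∘ₗ Submodule.inclusion (prolongable_le x V))) :
    CoversTruncatedNormalForm x I N := by
  obtain ⟨s, hs⟩ := Module.projective_lifting_property _ LinearMap.id hsurj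
  have hNs (y : E) : N (Submodule.inclusion (prolongable_le x V) (s y)) = y :=
    LinearMap.congr_fun hs y
  have hs_inj : Function.Injective ((prolongable x V).subtype ∘ₗ s) :=
    Subtype.val_injective.comp (LinearMap.injective_of_comp_eq_id _ _ hs)
  let e := LinearEquiv.ofInjective _ hs_inj
  refine ⟨_, e.toLinearMap ∘ₗ N, e.symm, ⟨?_, ?_, ?_, ?_⟩, fun v => (e.symm_apply_apply _).symm⟩
  · rintro _ ⟨y, rfl⟩
    exact (s y).2
  · rw [← e.finrank_eq, hE]
  · rw [LinearEquiv.ker_comp, hker]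
  · rintro ⟨_, y, rfl⟩
    exact congrArg e (hNs y)

theorem coversTruncatedNormalForm_iff [Module.Projective K E]
    (hE : Module.finrank K E = Module.finrank K (A ⧸ I)) :
    CoversTruncatedNormalForm x I N ↔
      LinearMap.ker N = (I.restrictScalars K).comap V.subtype ∧
        Function.Surjective (N ∘ₗ Submodule.inclusion (prolongable_le x V)) :=
  ⟨fun h => ⟨h.ker_eq, h.surjective_comp_inclusion⟩,
    fun h => coversTruncatedNormalForm_of_ker_eq hE h.1 h.2⟩

theorem smul_mem_range_residue (hker : ∀ v : V, N v = 0 → (v : A) ∈ I)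
    (hsurj : Function.Surjective (N ∘ₗ Submodule.inclusion (prolongable_le x V))) (i : ι)
    {m : A ⧸ I} (hm : m ∈ LinearMap.range (residue I V)) :
    x i • m ∈ LinearMap.range (residue I V) := by
  obtain ⟨v, rfl⟩ := hm
  obtain ⟨⟨w, hw⟩, hNw⟩ := hsurj (N v)
  obtain ⟨hwV, hxw⟩ := mem_prolongable.1 hw
  have hwv : w - v ∈ I := hker (⟨w, hwV⟩ - v) (by rw [map_sub, sub_eq_zero]; exact hNw)
  have hxwv : x i * w - x i * v ∈ I := by
    rw [← mul_sub]
    exact I.mul_mem_left _ hwv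
  exact ⟨⟨x i * w, hxw i⟩, Ideal.Quotient.eq.2 hxwv⟩

theorem surjective_residue_iff_exists_isUnit (hx : Algebra.adjoin K (Set.range x) = ⊤)
    (hker : ∀ v : V, N v = 0 → (v : A) ∈ I)
    (hsurj : Function.Surjective (N ∘ₗ Submodule.inclusion (prolongable_le x V))) :
    Function.Surjective (residue I V) ↔ ∃ u : V, IsUnit (Ideal.Quotient.mk I (u : A)) := by
  constructor
  · intro h
    obtain ⟨u, hu⟩ := h 1
    exact ⟨u, hu ▸ isUnit_one⟩
  · rintro ⟨u, hu⟩
    refine LinearMap.range_eq_top.1 (eq_top_of_isUnit_mem_of_smul_mem hx ?_ hu ⟨u, rfl⟩)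
    rintro _ ⟨i, rfl⟩ m hm
    exact smul_mem_range_residue hker hsurj i hm

end TruncatedNormalForm

section Field

variable {K A E ι : Type*} [Field K] [CommRing A] [Algebra K A] [AddCommGroup E] [Module K E]
  [FiniteDimensional K E] {x : ι → A} {I : Ideal A} [FiniteDimensional K (A ⧸ I)]
  {V : Submodule K A} {N : V →ₗ[K] E}

theorem ker_eq_iff_exists_isUnit (hE : Module.finrank K E = Module.finrank K (A ⧸ I))
    (hx : Algebra.adjoin K (Set.range x) = ⊤) (hker : ∀ v : V, N v = 0 → (v : A) ∈ I)
    (hsurj : Function.Surjective (N ∘ₗ Submodule.inclusion (prolongable_le x V))) :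
    LinearMap.ker N = (I.restrictScalars K).comap V.subtype ↔
      ∃ u : V, IsUnit (Ideal.Quotient.mk I (u : A)) := by
  have hN : Function.Surjective N :=
    .of_comp (g := Submodule.inclusion (prolongable_le x V)) hsurj
  have hker_le : LinearMap.ker N ≤ LinearMap.ker (residue I V) := (ker_residue I V).symm ▸ hker
  rw [← ker_residue, ker_eq_ker_iff_surjective_of_finrank_eq hE hN hker_le,
    surjective_residue_iff_exists_isUnit hx hker hsurj]

theorem stmt1_general (hE : Module.finrank K E = Module.finrank K (A ⧸ I))
    (hx : Algebra.adjoin K (Set.range x) = ⊤) :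
    CoversTruncatedNormalForm x I N ↔
      (∃ u : V, IsUnit (Ideal.Quotient.mk I (u : A))) ∧
        (∀ v : V, N v = 0 → (v : A) ∈ I) ∧
        Function.Surjective (N ∘ₗ Submodule.inclusion (prolongable_le x V)) := by
  rw [coversTruncatedNormalForm_iff hE]
  constructor
  · rintro ⟨hker, hsurj⟩
    exact ⟨(ker_eq_iff_exists_isUnit hE hx hker.le hsurj).1 hker, hker.le, hsurj⟩
  · rintro ⟨hunit, hker, hsurj⟩
    exact ⟨(ker_eq_iff_exists_isUnit hE hx hker hsurj).2 hunit, hsurj⟩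

end Field

section PolynomialRing

variable {n δ : ℕ} {I : Ideal (MvPolynomial (Fin n) ℂ)}
  {V B : Submodule ℂ (MvPolynomial (Fin n) ℂ)}

theorem isTNF_iff_isTruncatedNormalForm {𝒩 : V →ₗ[ℂ] B}
    (hδ : Module.finrank ℂ (MvPolynomial (Fin n) ℂ ⧸ I) = δ) :
    IsTNF n δ I V B 𝒩 ↔ IsTruncatedNormalForm X I V B 𝒩 := by
  constructor
  · intro h
    exact ⟨fun b hb => mem_prolongable.2 ⟨h.hBV hb, h.hmul b hb⟩, h.hdim.trans hδ.symm, h.hker,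
      fun b => Subtype.ext (h.hid _ b.2)⟩
  · intro h
    exact
      { hBV := h.le_prolongable.trans (prolongable_le X V)
        hdim := h.finrank_eq.trans hδ
        hmul := fun b hb => (mem_prolongable.1 (h.le_prolongable hb)).2
        hsurj := fun b => ⟨_, h.apply_inclusion b⟩
        hker := h.ker_eq
        hid := fun v hv => congrArg Subtype.val (h.apply_inclusion ⟨v, hv⟩) }

theorem coversTNF_iff_coversTruncatedNormalForm {N : V →ₗ[ℂ] (Fin δ → ℂ)}
    (hδ : Module.finrank ℂ (MvPolynomial (Fin n) ℂ ⧸ I) = δ) :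
    CoversTNF n δ I V N ↔ CoversTruncatedNormalForm X I N := by
  simp only [CoversTNF, CoversTruncatedNormalForm, isTNF_iff_isTruncatedNormalForm hδ]

end PolynomialRing

/-- a surjective `N : V → ℂ^δ` covers a TNF on `V` w.r.t. `I` iff
(a) some `u ∈ V` has `u + I` a unit in `R/I`; (b) `ker N ⊆ I ∩ V`;
(c) `N` restricted to `W = {f ∈ V : x_i f ∈ V, i = 1,…,n}` is onto `ℂ^δ`. -/
theorem stmt1 (n δ : ℕ) (I : Ideal (MvPolynomial (Fin n) ℂ))
    (hfin : FiniteDimensional ℂ (MvPolynomial (Fin n) ℂ ⧸ I))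
    (hδ : Module.finrank ℂ (MvPolynomial (Fin n) ℂ ⧸ I) = δ)
    (V : Submodule ℂ (MvPolynomial (Fin n) ℂ)) (hVfin : FiniteDimensional ℂ V)
    (N : V →ₗ[ℂ] (Fin δ → ℂ)) (hNsurj : Function.Surjective N)
    (W : Submodule ℂ (MvPolynomial (Fin n) ℂ))
    (hW : W = V ⊓ ⨅ i : Fin n, Submodule.comap (LinearMap.mulLeft ℂ (X i)) V)
    (hWV : W ≤ V) :
    CoversTNF n δ I V N ↔
      ((∃ u : V, IsUnit (Ideal.Quotient.mk I (u : MvPolynomial (Fin n) ℂ))) ∧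
        (∀ v : V, N v = 0 → (v : MvPolynomial (Fin n) ℂ) ∈ I) ∧
        Function.Surjective (N ∘ₗ Submodule.inclusion hWV)) := by
  subst hW
  exact (coversTNF_iff_coversTruncatedNormalForm hδ).trans
    (stmt1_general (by rw [Module.finrank_fin_fun, hδ]) adjoin_range_X)
end

section
/- Let I ⊆ R = ℂ[x₁,…,xₙ] be an ideal with dim_ℂ(R/I) = δ' < ∞ whose set of common zeros consists of r distinct points ξ₁,…,ξ_r ∈ ℂⁿ. Let V ⊆ R be a finite-dimensional subspace and N : V → ℂ^δ a surjective ℂ-linear map with ker N ⊆ I ∩ V. Let W' ⊆ V' ⊆ V be subspaces satisfying: (1) the composite ℂ-linear map W' ↪ R → R/I is surjective; (2) x_j·f ∈ V' for every f ∈ W' and every j = 1,…,n; (3) rank(N|_{W'}) = rank(N|_{V'}). Let B' ⊆ W' be a subspace with dim_ℂ B' = rank(N|_{B'}) = rank(N|_{W'}). Define N₀ : B' → ℂ^δ by N₀(b) = N(b) and, for j = 1,…,n, N_j : B' → ℂ^δ by N_j(b) = N(x_j·b). Then for each i = 1,…,r there exists a nonzero vector v_i ∈ ℂ^δ such that for every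 j = 1,…,n and every b ∈ B', ⟨v_i, N_j(b)⟩ = ξ_{i,j}·⟨v_i, N₀(b)⟩, where ξ_{i,j} is the j-th coordinate of ξ_i and ⟨·,·⟩ is the standard bilinear pairing on ℂ^δ. Consequently, the rank of the linear map B' → ℂ^δ given by b ↦ N_j(b) − ξ_{i,j}·N₀(b) is strictly less than dim_ℂ B'. -/
open MvPolynomial

/-- The rank of the restriction of `N : V → ℂ^δ` to a subspace `L ⊆ V`
(given as a subspace of the ambient polynomial ring). -/
noncomputable def restRank (n δ : ℕ) (V : Submodule ℂ (MvPolynomial (Fin n) ℂ))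
    (N : V →ₗ[ℂ] (Fin δ → ℂ)) (L : Submodule ℂ (MvPolynomial (Fin n) ℂ)) : ℕ :=
  Module.finrank ℂ (Submodule.map N (Submodule.comap V.subtype L))

/-! Since `ker N ⊆ I`, evaluation at a root of `I` vanishes on `ker N`, so it factors through `N`:
it is `f ↦ ⟨v, N f⟩` for some vector `v`. Multiplicativity of evaluation is then the eigenvector
relation. It also says that the image of `b ↦ N (x_j b) - ξ_j N b` lies in the hyperplane `v^⊥`.
This image is contained in `N V'`. Since `1 ∈ W' + I`, some element of `W' ⊆ V'` takes the value `1`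
at the root, so `N V'` is not contained in `v^⊥`; hence the image has smaller dimension than `N V'`,
which has the dimension of `B'`. -/

section LinearAlgebra

variable {K E F ι : Type*} [Field K] [AddCommGroup E] [Module K E] [AddCommGroup F] [Module K F]

theorem exists_dotProduct_comp_eq_of_ker_le [Fintype ι] {N : E →ₗ[K] ι → K} {e : Module.Dual K E}
    (h : LinearMap.ker N ≤ LinearMap.ker e) : ∃ v : ι → K, ∀ x, v ⬝ᵥ N x = e x := by
  classical
  obtain ⟨φ, rfl⟩ : e ∈ LinearMap.range N.dualMap := by
    rw [LinearMap.range_dualMap_eq_dualAnnihilator_ker, Submodule.mem_dualAnnihilator]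
    exact h
  obtain ⟨v, rfl⟩ := (dotProductEquiv K ι).surjective φ
  exact ⟨v, fun _ => rfl⟩

theorem finrank_lt_finrank_of_le_ker {p q : Submodule K F} [FiniteDimensional K q]
    {φ : Module.Dual K F} (hpq : p ≤ q) (hp : p ≤ LinearMap.ker φ) (hq : ¬ q ≤ LinearMap.ker φ) :
    Module.finrank K p < Module.finrank K q :=
  Submodule.finrank_lt_finrank_of_lt (hpq.lt_of_ne fun h => hq (h ▸ hp))

end LinearAlgebra

section Character

variable {K A F ι : Type*} [Field K] [Ring A] [Algebra K A] [AddCommGroup F] [Module K F]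
  {V V' B' : Submodule K A} {χ : A →ₐ[K] K}

theorem exists_mem_map_ne_zero_of_surjective_mk {I : Ideal A} [I.IsTwoSided]
    (hI : ∀ f ∈ I, χ f = 0) {W : Submodule K A}
    (hW : Function.Surjective fun w : W => Ideal.Quotient.mk I (w : A)) :
    ∃ w ∈ W, χ w ≠ 0 := by
  obtain ⟨⟨w, hwW⟩, hw⟩ := hW 1
  have hχw : χ w = 1 := by
    simpa only [map_sub, map_one, sub_eq_zero] using hI _ (Ideal.Quotient.eq.1 hw)
  exact ⟨w, hwW, hχw ▸ one_ne_zero⟩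

theorem finrank_range_pencil_lt [FiniteDimensional K F] {N : V →ₗ[K] F} {φ : Module.Dual K F}
    (hφ : ∀ f : V, φ (N f) = χ f) (hV'V : V' ≤ V) (hV' : ∃ w ∈ V', χ w ≠ 0) (hB'V' : B' ≤ V')
    {a : A} (ha : ∀ b ∈ B', a * b ∈ V') {M : B'.comap V.subtype →ₗ[K] F}
    (hM : ∀ (b : B'.comap V.subtype) (hab : a * (b : V) ∈ V),
      M b = N ⟨a * (b : V), hab⟩ - χ a • N b) :
    Module.finrank K (LinearMap.range M) < Module.finrank K ((V'.comap V.subtype).map N) := by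
  replace hM (b : B'.comap V.subtype) := hM b (hV'V (ha _ b.2))
  have range_le_map : LinearMap.range M ≤ (V'.comap V.subtype).map N := by
    rintro _ ⟨b, rfl⟩
    rw [hM b]
    exact sub_mem (Submodule.mem_map_of_mem (ha _ b.2))
      (Submodule.smul_mem _ _ (Submodule.mem_map_of_mem (hB'V' b.2)))
  have range_le_ker : LinearMap.range M ≤ LinearMap.ker φ := by
    rintro _ ⟨b, rfl⟩
    rw [LinearMap.mem_ker, hM b, map_sub, map_smul, hφ, hφ, map_mul, smul_eq_mul, sub_self]
  have map_not_le_ker : ¬ (V'.comap V.subtype).map N ≤ LinearMap.ker φ := by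
    obtain ⟨w, hwV', hχw⟩ := hV'
    intro h
    exact hχw (hφ ⟨w, hV'V hwV'⟩ ▸ h (Submodule.mem_map_of_mem hwV'))
  exact finrank_lt_finrank_of_le_ker range_le_map range_le_ker map_not_le_ker

theorem stmt2_general {σ : Type*} [Fintype ι] (x : σ → A) (N : V →ₗ[K] ι → K)
    (hker : ∀ v : V, N v = 0 → χ v = 0) (hV'V : V' ≤ V) (hV' : ∃ w ∈ V', χ w ≠ 0)
    (hB'V' : B' ≤ V') (hx : ∀ b ∈ B', ∀ j, x j * b ∈ V')
    (hrank : Module.finrank K ((V'.comap V.subtype).map N) ≤ Module.finrank K B') :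
    (∃ v : ι → K, v ≠ 0 ∧
      ∀ j, ∀ b : V, ∀ hxb : x j * (b : A) ∈ V,
        ∑ k, v k * N ⟨x j * (b : A), hxb⟩ k = χ (x j) * ∑ k, v k * N b k) ∧
    ∀ j, ∀ M : B'.comap V.subtype →ₗ[K] ι → K,
      (∀ (b : B'.comap V.subtype) (hxb : x j * ((b : V) : A) ∈ V),
        M b = N ⟨x j * ((b : V) : A), hxb⟩ - χ (x j) • N b) →
      Module.finrank K (LinearMap.range M) < Module.finrank K B' := by
  classical
  obtain ⟨v, hv⟩ := exists_dotProduct_comp_eq_of_ker_le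
    (e := χ.toLinearMap ∘ₗ V.subtype) fun f hf => hker f hf
  replace hv (f : V) : v ⬝ᵥ N f = χ f := hv f
  refine ⟨⟨v, ?_, fun j b hxb => ?_⟩, fun j M hM => ?_⟩
  · rintro rfl
    obtain ⟨w, hwV', hχw⟩ := hV'
    exact hχw (by rw [← hv ⟨w, hV'V hwV'⟩, zero_dotProduct])
  · change v ⬝ᵥ _ = _ * (v ⬝ᵥ _)
    rw [hv, hv, map_mul]
  · exact (finrank_range_pencil_lt (φ := dotProductEquiv K ι v) hv hV'V hV' hB'V'
      (fun b hb => hx b hb j) hM).trans_le hrank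

end Character

/-- eigenvector structure of the pencils `N_j − ξ_{i,j} N₀` for a
non-generic zero-dimensional system. -/
theorem stmt2 (n δ δ' r : ℕ) (I : Ideal (MvPolynomial (Fin n) ℂ))
    (hfin : FiniteDimensional ℂ (MvPolynomial (Fin n) ℂ ⧸ I))
    (hδ' : Module.finrank ℂ (MvPolynomial (Fin n) ℂ ⧸ I) = δ')
    (ξ : Fin r → (Fin n → ℂ)) (hdist : Function.Injective ξ)
    (hzeros : {z : Fin n → ℂ | ∀ f ∈ I, MvPolynomial.eval z f = 0} = Set.range ξ)
    (V : Submodule ℂ (MvPolynomial (Fin n) ℂ)) (hVfin : FiniteDimensional ℂ V)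
    (N : V →ₗ[ℂ] (Fin δ → ℂ)) (hNsurj : Function.Surjective N)
    (hker : ∀ v : V, N v = 0 → (v : MvPolynomial (Fin n) ℂ) ∈ I)
    (W' V' : Submodule ℂ (MvPolynomial (Fin n) ℂ))
    (hW'V' : W' ≤ V') (hV'V : V' ≤ V)
    -- condition 1: the composite `W' ↪ R → R/I` is surjective
    (hcond1 : Function.Surjective
      (fun w : W' => Ideal.Quotient.mk I (w : MvPolynomial (Fin n) ℂ)))
    -- condition 2: `x_j · W' ⊆ V'`
    (hcond2 : ∀ f ∈ W', ∀ j : Fin n, MvPolynomial.X j * f ∈ V')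
    -- condition 3: `rank(N|_{W'}) = rank(N|_{V'})`
    (hcond3 : restRank n δ V N W' = restRank n δ V N V')
    (B' : Submodule ℂ (MvPolynomial (Fin n) ℂ)) (hB'W' : B' ≤ W')
    (hB'dim : Module.finrank ℂ B' = restRank n δ V N B')
    (hB'rk : restRank n δ V N B' = restRank n δ V N W') :
    ∀ i : Fin r,
      (∃ v : Fin δ → ℂ, v ≠ 0 ∧
        ∀ j : Fin n, ∀ b : V, (b : MvPolynomial (Fin n) ℂ) ∈ B' →
          ∀ hxb : MvPolynomial.X j * (b : MvPolynomial (Fin n) ℂ) ∈ V,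
            (∑ k, v k * N (⟨MvPolynomial.X j * (b : MvPolynomial (Fin n) ℂ), hxb⟩ : V) k)
              = ξ i j * (∑ k, v k * N b k)) ∧
      (∀ j : Fin n, ∀ M : (Submodule.comap V.subtype B') →ₗ[ℂ] (Fin δ → ℂ),
        (∀ b : Submodule.comap V.subtype B',
          ∀ hxb : MvPolynomial.X j * ((b : V) : MvPolynomial (Fin n) ℂ) ∈ V,
            M b = N (⟨MvPolynomial.X j * ((b : V) : MvPolynomial (Fin n) ℂ), hxb⟩ : V)
              - ξ i j • N (b : V)) →
        Module.finrank ℂ (LinearMap.range M) < Module.finrank ℂ B') := by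
  intro i
  have hI : ∀ f ∈ I, aeval (R := ℂ) (ξ i) f = 0 := hzeros.ge ⟨i, rfl⟩
  obtain ⟨w, hwW', hw⟩ := exists_mem_map_ne_zero_of_surjective_mk hI hcond1
  have h := stmt2_general X N (fun v hv => hI v (hker v hv)) hV'V ⟨w, hW'V' hwW', hw⟩
    (hB'W'.trans hW'V') (fun b hb => hcond2 b (hB'W' hb)) (hB'dim.trans (hB'rk.trans hcond3)).ge
  simp only [aeval_X] at h
  exact h.imp_left fun ⟨v, hv₀, hv⟩ => ⟨v, hv₀, fun j b _ => hv j b⟩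
end
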